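/- Let N = 1, s ∈ (0,∞), p ∈ (2,∞), and κ ∈ (0,1). Then the supremum M = sup{ Q_κ(u) : u ∈ H^s(ℝ) \ {0} } is finite if and only if 1/(2s) ≤ (1-κ)p/(p-2) ≤ 1/2. -/

import Mathlib

open MeasureTheory Filter Topology SchwartzMap

noncomputable section

abbrev Esp (N : ℕ) := EuclideanSpace ℝ (Fin N)

/-- An element of the Sobolev space `H^s(ℝ^N, ℂ)`: an `L²` function `u` together with (a
representative of) its distributional Fourier transform `hat`, satisfying
`(1+|ξ|²)^{s/2}·hat ∈ L²`. The relation between `u` and `hat` is expressed by duality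
against Schwartz functions (the multiplication formula `∫ u · 𝓕φ = ∫ û · φ`). -/
structure Hs (N : ℕ) (s : ℝ) where
  u : Esp N → ℂ
  hat : Esp N → ℂ
  u_mem : MemLp u 2 (volume : Measure (Esp N))
  hat_mem : MemLp (fun ξ => (((1 + ‖ξ‖ ^ 2) ^ (s / 2) : ℝ) : ℂ) * hat ξ) 2
    (volume : Measure (Esp N))
  fourier_spec : ∀ φ : SchwartzMap (Esp N) ℂ,
    ∫ x, u x * (FourierTransform.fourierCLE ℂ (SchwartzMap (Esp N) ℂ) φ) x = ∫ ξ, hat ξ * φ ξ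

/-- `u` does not vanish almost everywhere. -/
def Hs.Nontriv {N : ℕ} {s : ℝ} (U : Hs N s) : Prop :=
  ¬ (U.u =ᵐ[(volume : Measure (Esp N))] 0)

/-- `‖(|D|^s - 1) u‖_{L²}`: by Plancherel this is the `L²` norm of `(|ξ|^s - 1)·û`. -/
def dNorm {N : ℕ} {s : ℝ} (U : Hs N s) : ENNReal :=
  eLpNorm (fun ξ => ((‖ξ‖ ^ s - 1 : ℝ) : ℂ) * U.hat ξ) 2 (volume : Measure (Esp N))

/-- The quotient `Q_κ(u) = ‖u‖_{L^p} / (‖u‖_{L²}^κ ‖(|D|^s - 1)u‖_{L²}^{1-κ})`,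
computed in `[0,∞]`. -/
def Qquot {N : ℕ} {s : ℝ} (p κ : ℝ) (U : Hs N s) : ENNReal :=
  eLpNorm U.u (ENNReal.ofReal p) (volume : Measure (Esp N)) /
    (eLpNorm U.u 2 (volume : Measure (Esp N)) ^ κ * dNorm U ^ (1 - κ))

open FourierTransform

lemma ae_eq_of_schwartz {f g : Esp 1 → ℂ} (hf : LocallyIntegrable f volume)
    (hg : LocallyIntegrable g volume)
    (h : ∀ φ : SchwartzMap (Esp 1) ℂ, ∫ x, f x * φ x = ∫ x, g x * φ x) :
    f =ᵐ[volume] g := by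
  apply ae_eq_of_integral_contDiff_smul_eq hf hg
  intro k k_smooth k_cpt
  have hg₁ : HasCompactSupport (Complex.ofRealCLM ∘ k) := k_cpt.comp_left rfl
  have hg₂ : ContDiff ℝ (⊤ : ℕ∞) (Complex.ofRealCLM ∘ k) := by fun_prop
  have := h (hg₁.toSchwartzMap hg₂)
  simpa [mul_comm] using this

lemma L2_pairing (f : Lp (α := Esp 1) ℂ 2) (φ : SchwartzMap (Esp 1) ℂ) :
    ∫ x, f x * (𝓕 φ) x = ∫ ξ, (𝓕 f : Lp (α := Esp 1) ℂ 2) ξ * φ ξ := by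
  have h := congrArg (fun T => T φ) (Lp.fourier_toTemperedDistribution_eq f)
  simp only [TemperedDistribution.fourier_apply, Lp.toTemperedDistribution_apply] at h
  simpa [mul_comm] using h

lemma L1_pairing {h : Esp 1 → ℂ} (hh : Integrable h) (φ : SchwartzMap (Esp 1) ℂ) :
    ∫ x, (𝓕⁻ h) x * φ x = ∫ ξ, h ξ * (𝓕⁻ φ) ξ := by
  have := VectorFourier.integral_bilin_fourierIntegral_eq_flip (ContinuousLinearMap.mul ℂ ℂ)
    (L := -innerₗ (Esp 1)) (μ := volume) (ν := volume)
    Real.continuous_fourierChar (by simpa using! continuous_inner.neg) hh φ.integrable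
  rw [SchwartzMap.fourierInv_coe]
  have e : (-innerₗ (Esp 1)).flip = -innerₗ (Esp 1) := by
    ext x y; simp [real_inner_comm]
  rw [e] at this
  simpa using! this

lemma Hs.hat_memLp {s : ℝ} (hs : 0 < s) (U : Hs 1 s) : MemLp U.hat 2 volume := by
  have hm : Continuous (fun ξ : Esp 1 => (((1 + ‖ξ‖ ^ 2) ^ (s / 2) : ℝ) : ℂ)) := by
    refine Complex.continuous_ofReal.comp ?_
    refine Continuous.rpow_const (by fun_prop) (fun x => Or.inr (by positivity))
  have h1 : ∀ ξ : Esp 1, 1 ≤ ((1 + ‖ξ‖ ^ 2) ^ (s / 2) : ℝ) := fun ξ =>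
    Real.one_le_rpow (by nlinarith [norm_nonneg ξ]) (by positivity)
  refine U.hat_mem.of_le ?_ ?_
  · have := (hm.measurable.inv.aestronglyMeasurable (μ := volume)).mul U.hat_mem.1
    refine this.congr (Eventually.of_forall fun ξ => ?_)
    have : (((1 + ‖ξ‖ ^ 2) ^ (s / 2) : ℝ) : ℂ) ≠ 0 := by
      have := h1 ξ
      exact_mod_cast (by linarith : ((1 + ‖ξ‖ ^ 2) ^ (s / 2) : ℝ) ≠ 0)
    simp only [Pi.mul_apply, Pi.inv_apply]
    field_simp
  · refine Eventually.of_forall fun ξ => ?_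
    rw [norm_mul, Complex.norm_real, Real.norm_of_nonneg (by linarith [h1 ξ])]
    exact le_mul_of_one_le_left (norm_nonneg _) (h1 ξ)

lemma Hs.hat_ae {s : ℝ} (hs : 0 < s) (U : Hs 1 s) :
    U.hat =ᵐ[volume] ((𝓕 (U.u_mem.toLp U.u) : Lp (α := Esp 1) ℂ 2 volume) : Esp 1 → ℂ) := by
  refine ae_eq_of_schwartz ((U.hat_memLp hs).locallyIntegrable (by norm_num))
    ((Lp.memLp _).locallyIntegrable (by norm_num)) fun φ => ?_
  rw [← L2_pairing, ← U.fourier_spec φ]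
  refine integral_congr_ae ?_
  filter_upwards [U.u_mem.coeFn_toLp] with x hx
  rw [hx]; rfl

lemma Hs.plancherel {s : ℝ} (hs : 0 < s) (U : Hs 1 s) :
    eLpNorm U.u 2 volume = eLpNorm U.hat 2 volume := by
  rw [eLpNorm_congr_ae (U.hat_ae hs), ← eLpNorm_congr_ae U.u_mem.coeFn_toLp]
  have := Lp.norm_fourier_eq (U.u_mem.toLp U.u)
  rw [Lp.norm_def, Lp.norm_def] at this
  exact ((ENNReal.toReal_eq_toReal_iff' (Lp.eLpNorm_ne_top _) (Lp.eLpNorm_ne_top _)).1 this).symm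

lemma Hs.u_ae {s : ℝ} (U : Hs 1 s) (h : Integrable U.hat volume) :
    U.u =ᵐ[volume] 𝓕⁻ U.hat := by
  have hc : Continuous (𝓕⁻ U.hat) := by
    exact VectorFourier.fourierIntegral_continuous Real.continuous_fourierChar
      (by simpa using! continuous_inner.neg) h
  refine ae_eq_of_schwartz (U.u_mem.locallyIntegrable (by norm_num)) hc.locallyIntegrable
     fun φ => ?_
  rw [L1_pairing h, ← U.fourier_spec]
  simp

lemma Hs.exists_of_hat {s : ℝ} {h : Esp 1 → ℂ} (hh : MemLp h 2 volume)
    (hm : MemLp (fun ξ => (((1 + ‖ξ‖ ^ 2) ^ (s / 2) : ℝ) : ℂ) * h ξ) 2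
    (volume : Measure (Esp 1))) : ∃ U : Hs 1 s, U.hat = h := by
  refine ⟨⟨((𝓕⁻ (hh.toLp h) : Lp (α := Esp 1) ℂ 2 volume) : Esp 1 → ℂ), h, Lp.memLp _, hm, fun φ => ?_⟩, rfl⟩
  have := L2_pairing (𝓕⁻ (hh.toLp h)) φ
  rw [FourierTransform.fourier_fourierInv_eq] at this
  refine Eq.trans this ?_
  refine integral_congr_ae ?_
  filter_upwards [hh.coeFn_toLp] with x hx
  rw [hx]

lemma enorm_fourierInv_le (h : Esp 1 → ℂ) (x : Esp 1) : ‖(𝓕⁻ h) x‖ₑ ≤ eLpNorm h 1 volume := by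
  rw [Real.fourierInv_eq, eLpNorm_one_eq_lintegral_enorm]
  refine (enorm_integral_le_lintegral_enorm _).trans (le_of_eq ?_)
  refine lintegral_congr fun v => ?_
  rw [← ofReal_norm, ← ofReal_norm, Circle.norm_smul]

lemma norm_esp (x : Esp 1) : ‖x‖ = |x 0| := by
  rw [EuclideanSpace.norm_eq]; simp [Real.sqrt_sq_eq_abs]

lemma lintegral_esp (f : ℝ → ENNReal) : ∫⁻ x : Esp 1, f (x 0) = ∫⁻ t : ℝ, f t := by
  have h1 := (EuclideanSpace.volume_preserving_symm_measurableEquiv_toLp (Fin 1)).trans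
    (volume_preserving_funUnique (Fin 1) ℝ)
  have := h1.lintegral_comp_emb (MeasurableEquiv.measurableEmbedding _) f
  rw [← this]
  rfl

lemma vol_closedBall_esp (a : Esp 1) (r : ℝ) :
    volume (Metric.closedBall a r) = ENNReal.ofReal (2 * r) := by
  rw [← lintegral_indicator_one Metric.isClosed_closedBall.measurableSet]
  have : ∀ x : Esp 1, (Metric.closedBall a r).indicator (1 : Esp 1 → ENNReal) x =
      (Metric.closedBall (a 0) r).indicator (1 : ℝ → ENNReal) (x 0) := by
    intro x
    have : x ∈ Metric.closedBall a r ↔ x 0 ∈ Metric.closedBall (a 0) r := by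
      rw [mem_closedBall_iff_norm, mem_closedBall_iff_norm, norm_esp, Real.norm_eq_abs]; rfl
    by_cases h : x ∈ Metric.closedBall a r
    · rw [Set.indicator_of_mem h, Set.indicator_of_mem (this.1 h)]; rfl
    · rw [Set.indicator_of_notMem h, Set.indicator_of_notMem (fun h' => h (this.2 h'))]
  simp_rw [this]
  rw [lintegral_esp, lintegral_indicator_one Metric.isClosed_closedBall.measurableSet,
    Real.volume_closedBall]

def Jint (q : ℝ) : ENNReal := ∫⁻ t : ℝ, ENNReal.ofReal ((1 + |t|) ^ (-q))

lemma Jint_lt (q : ℝ) (hq : 1 < q) : Jint q < ⊤ := by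
  have := finite_integral_one_add_norm (E := ℝ) (μ := volume) (r := q) (by simpa using hq)
  simpa [Jint] using this

lemma lintegral_scale (q ρ : ℝ) (hρ : 0 < ρ) :
    ∫⁻ t : ℝ, ENNReal.ofReal ((1 + |t| / ρ) ^ (-q)) = ENNReal.ofReal ρ * Jint q := by
  have h := Real.map_volume_mul_left (a := ρ⁻¹) (by positivity)
  have e : ∀ t : ℝ, |t| / ρ = |ρ⁻¹ * t| := fun t => by
    rw [abs_mul, abs_of_pos (by positivity : (0:ℝ) < ρ⁻¹)]; field_simp
  simp_rw [e]
  have hm : Measurable (fun t : ℝ => ENNReal.ofReal ((1 + |t|) ^ (-q))) := by fun_prop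
  rw [← lintegral_map (f := fun t : ℝ => ENNReal.ofReal ((1 + |t|) ^ (-q)))
    (g := fun t => ρ⁻¹ * t) hm (by fun_prop)]
  have h' : Measure.map (fun t => ρ⁻¹ * t) volume = ENNReal.ofReal ρ • (volume : Measure ℝ) := by
    rw [show (fun t : ℝ => ρ⁻¹ * t) = (ρ⁻¹ * ·) from rfl, h]; simp [abs_of_pos hρ]
  rw [h', lintegral_smul_measure]; rfl

/-- pointwise bound, small `l` -/
lemma pt_small (s l r : ℝ) (hs : 1 ≤ s) (hl : 0 < l) (hr : 0 ≤ r) :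
    (l + |r ^ s - 1|) ^ (-2 : ℝ) ≤ l ^ (-2 : ℝ) * (1 + |r - 1| / l) ^ (-2 : ℝ) := by
  rw [← Real.mul_rpow hl.le (by positivity)]
  have e : l * (1 + |r - 1| / l) = l + |r - 1| := by field_simp
  rw [e]
  refine Real.rpow_le_rpow_of_nonpos (by positivity) ?_ (by norm_num)
  gcongr 1
  rcases le_total r 1 with h | h
  · have : r ^ s ≤ r ^ (1:ℝ) := by
      rcases hr.eq_or_lt with rfl | h0
      · rw [Real.zero_rpow (by linarith), Real.zero_rpow (by norm_num)]
      · exact Real.rpow_le_rpow_of_exponent_ge h0 h hs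
    rw [Real.rpow_one] at this
    rw [abs_of_nonpos (by linarith), abs_of_nonpos (by linarith)]; linarith
  · have : r ^ (1:ℝ) ≤ r ^ s := Real.rpow_le_rpow_of_exponent_le h hs
    rw [Real.rpow_one] at this
    rw [abs_of_nonneg (by linarith), abs_of_nonneg (by linarith)]; linarith

/-- pointwise bound, large `l` -/
lemma pt_large (s l r : ℝ) (hs : 1 ≤ s) (hl : 1 ≤ l) (hr : 0 ≤ r) :
    (l + |r ^ s - 1|) ^ (-2 : ℝ) ≤
      l ^ (-2 : ℝ) * 4 ^ s * (1 + r / l ^ (1 / s)) ^ (-(2 * s)) := by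
  have hl0 : 0 < l := by linarith
  set ρ := l ^ (1 / s) with hρ
  have hρ0 : 0 < ρ := by positivity
  have hρs : ρ ^ s = l := by
    rw [hρ, ← Real.rpow_mul hl0.le, one_div_mul_cancel (by linarith), Real.rpow_one]
  have h2 : l * ((1 + r / ρ) / 2) ^ s ≤ l + |r ^ s - 1| := by
    rcases le_total r ρ with h | h
    · have : ((1 + r / ρ) / 2) ^ s ≤ 1 := by
        apply Real.rpow_le_one (by positivity) _ (by linarith)
        have : r / ρ ≤ 1 := (div_le_one hρ0).2 h
        linarith
      nlinarith [abs_nonneg (r ^ s - 1)]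
    · have : ((1 + r / ρ) / 2) ^ s ≤ (r / ρ) ^ s := by
        apply Real.rpow_le_rpow (by positivity) _ (by linarith)
        have : 1 ≤ r / ρ := (one_le_div hρ0).2 h
        linarith
      rw [Real.div_rpow hr hρ0.le, hρs] at this
      have h3 : l * ((1 + r / ρ) / 2) ^ s ≤ l * (r ^ s / l) := by gcongr
      have h4 : l * (r ^ s / l) = r ^ s := by field_simp
      linarith [le_abs_self (r ^ s - 1)]
  refine (Real.rpow_le_rpow_of_nonpos (by positivity) h2 (by norm_num)).trans (le_of_eq ?_)
  rw [Real.mul_rpow hl0.le (by positivity), mul_assoc]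
  congr 1
  rw [← Real.rpow_mul (by positivity), Real.div_rpow (by positivity) (by norm_num),
    show s * (-2) = -(2 * s) by ring, Real.rpow_neg (by norm_num : (0:ℝ) ≤ 2),
    Real.rpow_mul (by norm_num : (0:ℝ) ≤ 2)]
  norm_num
  ring

lemma K_bound (s x l : ℝ) (hs : 1 ≤ s) (hx1 : 1 / (2 * s) ≤ x) (hx2 : x ≤ 1 / 2) (hl : 0 < l) :
    ∫⁻ ξ : Esp 1, ENNReal.ofReal ((l + |‖ξ‖ ^ s - 1|) ^ (-2 : ℝ)) ≤
      (2 * Jint 2 + ENNReal.ofReal (4 ^ s) * Jint (2 * s)) * ENNReal.ofReal (l ^ (2 * x - 2)) := by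
  simp_rw [norm_esp]
  rw [lintegral_esp (fun t => ENNReal.ofReal ((l + abs (|t| ^ s - 1)) ^ (-2 : ℝ)))]
  rcases le_total l 1 with h | h
  · have step : ∀ t : ℝ, ENNReal.ofReal ((l + abs (|t| ^ s - 1)) ^ (-2 : ℝ)) ≤
        ENNReal.ofReal (l ^ (-2 : ℝ)) * (ENNReal.ofReal ((1 + |t - 1| / l) ^ (-2 : ℝ)) +
         ENNReal.ofReal ((1 + |t - (-1)| / l) ^ (-2 : ℝ))) := by
      intro t
      rw [← ENNReal.ofReal_add (by positivity) (by positivity), ← ENNReal.ofReal_mul (by positivity)]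
      apply ENNReal.ofReal_le_ofReal
      refine (pt_small s l |t| hs hl (abs_nonneg t)).trans ?_
      gcongr
      rcases le_total 0 t with h | h
      · rw [abs_of_nonneg h]
        have : 0 ≤ (1 + |t - (-1)| / l) ^ (-2 : ℝ) := by positivity
        linarith
      · rw [abs_of_nonpos h, show -t - 1 = -(t - (-1)) by ring, abs_neg]
        have : 0 ≤ (1 + |t - 1| / l) ^ (-2 : ℝ) := by positivity
        linarith
    refine (lintegral_mono step).trans ?_
    rw [lintegral_const_mul _ (by fun_prop), lintegral_add_left (by fun_prop),
      lintegral_sub_right_eq_self (fun t : ℝ => ENNReal.ofReal ((1 + |t| / l) ^ (-2 : ℝ))) 1,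
      lintegral_sub_right_eq_self (fun t : ℝ => ENNReal.ofReal ((1 + |t| / l) ^ (-2 : ℝ))) (-1),
      lintegral_scale 2 l hl]
    calc _ = (2 * Jint 2) * (ENNReal.ofReal (l ^ (-2 : ℝ)) * ENNReal.ofReal l) := by ring
      _ ≤ _ := by
        gcongr
        · exact le_self_add
        · rw [← ENNReal.ofReal_mul (by positivity)]
          apply ENNReal.ofReal_le_ofReal
          conv_lhs => rw [← Real.rpow_one l, ← Real.rpow_mul hl.le, ← Real.rpow_add hl]
          exact Real.rpow_le_rpow_of_exponent_ge hl h (by linarith)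
  · have step : ∀ t : ℝ, ENNReal.ofReal ((l + abs (|t| ^ s - 1)) ^ (-2 : ℝ)) ≤
        ENNReal.ofReal (l ^ (-2 : ℝ) * 4 ^ s) *
          ENNReal.ofReal ((1 + |t| / l ^ (1 / s)) ^ (-(2 * s))) := by
      intro t
      rw [← ENNReal.ofReal_mul (by positivity)]
      exact ENNReal.ofReal_le_ofReal (pt_large s l |t| hs h (abs_nonneg t))
    refine (lintegral_mono step).trans ?_
    rw [lintegral_const_mul _ (by fun_prop), lintegral_scale (2 * s) _ (by positivity),
      ENNReal.ofReal_mul (by positivity)]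
    calc _ = (ENNReal.ofReal (4 ^ s) * Jint (2 * s)) *
            (ENNReal.ofReal (l ^ (-2 : ℝ)) * ENNReal.ofReal (l ^ (1 / s))) := by ring
      _ ≤ _ := by
        gcongr
        · exact le_add_self
        · rw [← ENNReal.ofReal_mul (by positivity)]
          apply ENNReal.ofReal_le_ofReal
          rw [← Real.rpow_add hl]
          refine Real.rpow_le_rpow_of_exponent_le h ?_
          have : 1 / s = 2 * (1 / (2 * s)) := by field_simp
          linarith

def Cst (s : ℝ) : ENNReal := 2 * Jint 2 + ENNReal.ofReal (4 ^ s) * Jint (2 * s)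

lemma Cst_lt (s : ℝ) (hs : 1 ≤ s) : Cst s < ⊤ := by
  refine ENNReal.add_lt_top.2 ⟨ENNReal.mul_lt_top (by simp) (Jint_lt _ (by norm_num)),
    ENNReal.mul_lt_top (by simp) (Jint_lt _ (by linarith))⟩

lemma hat_L1_bound (s x : ℝ) (hs : 1 ≤ s) (hx1 : 1 / (2 * s) ≤ x) (hx2 : x ≤ 1 / 2)
    (h : Esp 1 → ℂ) (hh : AEStronglyMeasurable h volume) (a b : ℝ) (ha : 0 < a) (hb : 0 < b)
    (hA : eLpNorm h 2 volume ≤ ENNReal.ofReal a)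
    (hB : eLpNorm (fun ξ => ((‖ξ‖ ^ s - 1 : ℝ) : ℂ) * h ξ) 2 volume ≤ ENNReal.ofReal b) :
    eLpNorm h 1 volume ≤ 2 * Cst s ^ (1 / 2 : ℝ) * ENNReal.ofReal (a ^ (1 - x) * b ^ x) := by
  set l : ℝ := b / a with hl
  have hl0 : 0 < l := by positivity
  set w : Esp 1 → ℝ := fun ξ => l + |‖ξ‖ ^ s - 1| with hw
  have hw0 : ∀ ξ, 0 < w ξ := fun ξ => by positivity
  have hwm : Measurable w := by fun_prop
  have hw1 : eLpNorm (fun ξ => (w ξ)⁻¹) 2 volume ≤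
      (Cst s * ENNReal.ofReal (l ^ (2 * x - 2))) ^ (1 / 2 : ℝ) := by
    rw [eLpNorm_eq_lintegral_rpow_enorm_toReal (by norm_num) (by norm_num)]
    simp only [ENNReal.toReal_ofNat]
    refine ENNReal.rpow_le_rpow ?_ (by norm_num)
    refine le_trans (le_of_eq ?_) (K_bound s x l hs hx1 hx2 hl0)
    refine lintegral_congr fun ξ => ?_
    rw [← ofReal_norm, Real.norm_of_nonneg (inv_nonneg.2 (hw0 ξ).le),
      ENNReal.ofReal_rpow_of_nonneg (inv_nonneg.2 (hw0 ξ).le) (by norm_num),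
      Real.inv_rpow (hw0 ξ).le, ← Real.rpow_neg (hw0 ξ).le]
  have hw2 : eLpNorm (fun ξ => (w ξ) • h ξ) 2 volume ≤ 2 * ENNReal.ofReal b := by
    have e : (fun ξ => (w ξ) • h ξ) =
        (l • h) + (fun ξ => (|‖ξ‖ ^ s - 1|) • h ξ) := by
      ext ξ; simp [hw, add_mul]
    rw [e]
    refine (eLpNorm_add_le (hh.const_smul l)
      ((by fun_prop : Measurable (fun ξ : Esp 1 => |‖ξ‖ ^ s - 1|)).aestronglyMeasurable.smul hh)
      (by norm_num)).trans ?_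
    rw [two_mul]
    refine add_le_add ?_ ?_
    · rw [eLpNorm_const_smul]
      calc _ ≤ ENNReal.ofReal l * ENNReal.ofReal a := by
            gcongr
            rw [← ofReal_norm, Real.norm_of_nonneg hl0.le]
        _ = _ := by rw [← ENNReal.ofReal_mul hl0.le, hl]; congr 1; field_simp
    · refine le_trans (le_of_eq (eLpNorm_congr_norm_ae (Eventually.of_forall fun ξ => ?_))) hB
      simp [-Complex.ofReal_sub]
  have hol := eLpNorm_smul_le_mul_eLpNorm (p := 2) (q := 2) (r := 1) (μ := volume)
    (f := fun ξ => (w ξ) • h ξ) (φ := fun ξ => (w ξ)⁻¹) (hwm.aestronglyMeasurable.smul hh)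
    hwm.inv.aestronglyMeasurable
  have e : ((fun ξ => (w ξ)⁻¹) • (fun ξ => (w ξ) • h ξ)) = h := by
    ext ξ
    simp only [Pi.smul_apply']
    rw [smul_smul, inv_mul_cancel₀ (hw0 ξ).ne', one_smul]
  rw [e] at hol
  refine hol.trans ((mul_le_mul' hw1 hw2).trans (le_of_eq ?_))
  rw [ENNReal.mul_rpow_of_nonneg _ _ (by norm_num),
    ENNReal.ofReal_rpow_of_nonneg (by positivity) (by norm_num), ← Real.rpow_mul hl0.le]
  have e2 : a ^ (1 - x) * b ^ x = l ^ ((2 * x - 2) * (1 / 2)) * b := by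
    rw [show (2 * x - 2) * (1 / 2) = x - 1 by ring, hl, Real.div_rpow hb.le ha.le,
      Real.rpow_sub hb, Real.rpow_one, show 1 - x = -(x - 1) by ring, Real.rpow_neg ha.le]
    field_simp
  rw [e2, ENNReal.ofReal_mul (by positivity)]
  ring

lemma interp (f : Esp 1 → ℂ) (p : ℝ) (hp : 2 < p) (T : ENNReal) (hTt : T ≠ ⊤)
    (hT : ∀ᵐ x ∂(volume : Measure (Esp 1)), ‖f x‖ₑ ≤ T) :
    eLpNorm f (ENNReal.ofReal p) volume ≤
      eLpNorm f 2 volume ^ (2 / p) * T ^ ((p - 2) / p) := by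
  have hp0 : 0 < p := by linarith
  rw [eLpNorm_eq_lintegral_rpow_enorm_toReal (by simpa using hp0) (by simp),
    eLpNorm_eq_lintegral_rpow_enorm_toReal (by norm_num) (by norm_num),
    ENNReal.toReal_ofReal hp0.le]
  simp only [ENNReal.toReal_ofNat]
  have : ∫⁻ x, ‖f x‖ₑ ^ p ≤ (∫⁻ x, ‖f x‖ₑ ^ (2:ℝ)) * T ^ (p - 2) := by
    rw [← lintegral_mul_const' _ _ (ENNReal.rpow_ne_top_of_nonneg (by linarith) hTt)]
    refine lintegral_mono_ae ?_
    filter_upwards [hT] with x hx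
    calc ‖f x‖ₑ ^ p = ‖f x‖ₑ ^ (2:ℝ) * ‖f x‖ₑ ^ (p - 2) := by
          rw [← ENNReal.rpow_add_of_nonneg _ _ (by norm_num) (by linarith)]; congr 1; ring
      _ ≤ _ := by gcongr
  refine (ENNReal.rpow_le_rpow this (by positivity)).trans (le_of_eq ?_)
  rw [ENNReal.mul_rpow_of_nonneg _ _ (by positivity), ← ENNReal.rpow_mul, ← ENNReal.rpow_mul]
  congr 2 <;> field_simp

lemma dNorm_lt_top {s : ℝ} (hs : 0 < s) (U : Hs 1 s) : dNorm U < ⊤ := by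
  have hm : Measurable (fun ξ : Esp 1 => ((‖ξ‖ ^ s - 1 : ℝ) : ℂ)) := by fun_prop
  refine (U.hat_mem.of_le (hm.aestronglyMeasurable.mul (U.hat_memLp hs).1)
    (Eventually.of_forall fun ξ => ?_)).2
  simp only [Pi.mul_apply]
  rw [norm_mul, norm_mul, Complex.norm_real, Complex.norm_real, Real.norm_eq_abs, Real.norm_eq_abs]
  refine mul_le_mul_of_nonneg_right ?_ (norm_nonneg _)
  have h1 : 1 ≤ ((1 + ‖ξ‖ ^ 2) ^ (s / 2) : ℝ) :=
    Real.one_le_rpow (by nlinarith [norm_nonneg ξ]) (by positivity)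
  have h2 : ‖ξ‖ ^ s ≤ ((1 + ‖ξ‖ ^ 2) ^ (s / 2) : ℝ) := by
    have : ‖ξ‖ ^ s = (‖ξ‖ ^ 2) ^ (s / 2) := by
      rw [← Real.rpow_natCast, ← Real.rpow_mul (norm_nonneg _)]; congr 1; push_cast; ring
    rw [this]
    exact Real.rpow_le_rpow (by positivity) (by linarith) (by positivity)
  have h3 : 0 ≤ ‖ξ‖ ^ s := by positivity
  rw [abs_of_nonneg (by linarith : (0:ℝ) ≤ (1 + ‖ξ‖ ^ 2) ^ (s / 2)), abs_le]
  constructor <;> linarith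

lemma Hs.Nontriv.norm_ne_zero {s : ℝ} {U : Hs 1 s} (h : U.Nontriv) : eLpNorm U.u 2 volume ≠ 0 := by
  intro h0
  exact h ((eLpNorm_eq_zero_iff U.u_mem.1 (by norm_num)).1 h0)

lemma Hs.Nontriv.dNorm_ne_zero {s : ℝ} (hs : 0 < s) {U : Hs 1 s} (h : U.Nontriv) :
    dNorm U ≠ 0 := by
  intro h0
  apply h.norm_ne_zero
  rw [U.plancherel hs, eLpNorm_eq_zero_iff (U.hat_memLp hs).1 (by norm_num)]
  have hm : Measurable (fun ξ : Esp 1 => ((‖ξ‖ ^ s - 1 : ℝ) : ℂ)) := by fun_prop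
  have h1 := (eLpNorm_eq_zero_iff (hm.aestronglyMeasurable.mul (U.hat_memLp hs).1)
    (by norm_num)).1 h0
  have h2 : ∀ᵐ ξ ∂(volume : Measure (Esp 1)), ξ ∉ Metric.sphere (0 : Esp 1) 1 :=
    measure_eq_zero_iff_ae_notMem.1 (Measure.addHaar_sphere _ _ _)
  filter_upwards [h1, h2] with ξ e1 e2
  simp only [Pi.mul_apply, Pi.zero_apply, mul_eq_zero, Complex.ofReal_eq_zero] at e1 ⊢
  rcases e1 with e1 | e1
  · exfalso
    apply e2
    have h3 : ‖ξ‖ ^ s = 1 ^ s := by rw [Real.one_rpow]; linarith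
    have := (Real.rpow_left_inj (norm_nonneg ξ) zero_le_one hs.ne').1 h3
    simpa using this
  · exact e1

lemma sufficiency (s p κ : ℝ) (hs : 0 < s) (hp : 2 < p)
    (h1 : 1 / (2 * s) ≤ (1 - κ) * p / (p - 2)) (h2 : (1 - κ) * p / (p - 2) ≤ 1 / 2) :
    (⨆ (U : Hs 1 s) (_ : U.Nontriv), Qquot p κ U) < ⊤ := by
  set x := (1 - κ) * p / (p - 2) with hx
  have hp0 : 0 < p := by linarith
  have hp2 : 0 < p - 2 := by linarith
  have hs1 : 1 ≤ s := by
    have : 1 / (2 * s) ≤ 1 / 2 := h1.trans h2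
    rw [div_le_div_iff₀ (by positivity) (by norm_num)] at this
    linarith
  have hD : (2 * Cst s ^ (1 / 2 : ℝ)) < ⊤ :=
    ENNReal.mul_lt_top (by simp) (ENNReal.rpow_lt_top_of_nonneg (by norm_num) (Cst_lt s hs1).ne)
  have hD' : (2 * Cst s ^ (1 / 2 : ℝ)) ^ ((p - 2) / p) < ⊤ :=
    ENNReal.rpow_lt_top_of_nonneg (by positivity) hD.ne
  refine lt_of_le_of_lt (iSup₂_le fun U hU => ?_) hD'
  have hA0 := hU.norm_ne_zero
  have hA1 : eLpNorm U.u 2 volume ≠ ⊤ := U.u_mem.2.ne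
  have hB0 := hU.dNorm_ne_zero hs
  have hB1 := (dNorm_lt_top hs U).ne
  have hA : ENNReal.ofReal (eLpNorm U.u 2 volume).toReal = eLpNorm U.u 2 volume :=
    ENNReal.ofReal_toReal hA1
  have hB : ENNReal.ofReal (dNorm U).toReal = dNorm U := ENNReal.ofReal_toReal hB1
  have ha := ENNReal.toReal_pos hA0 hA1
  have hb := ENNReal.toReal_pos hB0 hB1
  set a := (eLpNorm U.u 2 volume).toReal
  set b := (dNorm U).toReal
  have key := hat_L1_bound s x hs1 h1 h2 U.hat (U.hat_memLp hs).1 a b ha hb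
    (by rw [hA, U.plancherel hs]) (by rw [hB]; rfl)
  have hT : 2 * Cst s ^ (1 / 2 : ℝ) * ENNReal.ofReal (a ^ (1 - x) * b ^ x) ≠ ⊤ :=
    (ENNReal.mul_lt_top hD (by simp)).ne
  have hint : Integrable U.hat volume :=
    memLp_one_iff_integrable.1 ⟨(U.hat_memLp hs).1, lt_of_le_of_lt key hT.lt_top⟩
  have hI := interp U.u p hp _ hT (by
    filter_upwards [U.u_ae hint] with y hy
    rw [hy]
    exact (enorm_fourierInv_le _ _).trans key)
  unfold Qquot
  apply ENNReal.div_le_of_le_mul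
  refine hI.trans (le_of_eq ?_)
  rw [← hA, ← hB, ENNReal.mul_rpow_of_nonneg _ _ (by positivity),
    ENNReal.ofReal_rpow_of_pos ha, ENNReal.ofReal_rpow_of_pos ha, ENNReal.ofReal_rpow_of_pos hb,
    ENNReal.ofReal_rpow_of_pos (by positivity), mul_left_comm,
    ← ENNReal.ofReal_mul (by positivity), ← ENNReal.ofReal_mul (by positivity)]
  congr 2
  rw [Real.mul_rpow (by positivity) (by positivity), ← Real.rpow_mul ha.le, ← Real.rpow_mul hb.le,
    ← mul_assoc, ← Real.rpow_add ha]
  have e1 : x * ((p - 2) / p) = 1 - κ := by rw [hx]; field_simp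
  have e2 : 2 / p + (1 - x) * ((p - 2) / p) = κ := by
    rw [sub_mul, e1]; field_simp; ring
  rw [e1, e2]

lemma fourierInv_lower (a x : Esp 1) (r : ℝ) (hr : 0 < r) (hx : ‖x‖ ≤ 1 / (6 * r)) :
    r ≤ ‖(𝓕⁻ ((Metric.closedBall a r).indicator (fun _ => (1:ℂ)))) x‖ := by
  have hms : MeasurableSet (Metric.closedBall a r) := Metric.isClosed_closedBall.measurableSet
  have hvol : (volume : Measure (Esp 1)).real (Metric.closedBall a r) = 2 * r := by
    rw [Measure.real, vol_closedBall_esp, ENNReal.toReal_ofReal (by positivity)]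
  rw [Real.fourierInv_eq]
  set F : Esp 1 → ℂ := fun v => (Real.fourierChar (inner ℝ v x) : ℂ) with hF
  have hFc : Continuous F := by
    have := Real.continuous_fourierChar
    fun_prop
  have e : ∀ v, Real.fourierChar (inner ℝ v x) •
      (Metric.closedBall a r).indicator (fun _ => (1:ℂ)) v =
      (Metric.closedBall a r).indicator F v := by
    intro v
    by_cases h : v ∈ Metric.closedBall a r
    · rw [Set.indicator_of_mem h, Set.indicator_of_mem h, Circle.smul_def]; simp [hF]
    · rw [Set.indicator_of_notMem h, Set.indicator_of_notMem h]; simp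
  simp_rw [e]
  rw [integral_indicator hms]
  set c : ℂ := (Real.fourierChar (-inner ℝ a x) : ℂ) with hc
  have hcn : ‖c‖ = 1 := Circle.norm_coe _
  have hFi : IntegrableOn F (Metric.closedBall a r) volume :=
    hFc.continuousOn.integrableOn_compact (isCompact_closedBall a r)
  have h1 : ‖∫ v in Metric.closedBall a r, F v‖ = ‖∫ v in Metric.closedBall a r, c * F v‖ := by
    rw [integral_const_mul, norm_mul, hcn, one_mul]
  rw [h1]
  refine le_trans ?_ (Complex.re_le_norm _)
  have h2 : (∫ v in Metric.closedBall a r, c * F v).re =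
      ∫ v in Metric.closedBall a r, (c * F v).re :=
    (integral_re (𝕜 := ℂ) (hFi.const_mul c)).symm
  rw [h2]
  have h3 : ∫ v in Metric.closedBall a r, (1 / 2 : ℝ) = r := by
    rw [setIntegral_const, hvol, smul_eq_mul]; ring
  refine h3.symm.le.trans ?_
  refine setIntegral_mono_on (integrableOn_const (by rw [vol_closedBall_esp]; exact ENNReal.ofReal_ne_top)) (hFi.const_mul c).re hms fun v hv => ?_
  have h4 : c * F v = Complex.exp ((2 * Real.pi * inner ℝ (v - a) x : ℝ) * Complex.I) := by
    rw [hc, hF]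
    simp only [Real.fourierChar_apply]
    rw [← Complex.exp_add, inner_sub_left]
    congr 1
    push_cast
    ring
  change _ ≤ (c * F v).re
  rw [h4, Complex.exp_ofReal_mul_I_re]
  have h5 : |2 * Real.pi * inner ℝ (v - a) x| ≤ Real.pi / 3 := by
    have h6 : |inner ℝ (v - a) x| ≤ r * (1 / (6 * r)) := by
      refine (abs_real_inner_le_norm _ _).trans ?_
      gcongr
      exact mem_closedBall_iff_norm.1 hv
    have h7 : r * (1 / (6 * r)) = 1 / 6 := by field_simp
    rw [abs_mul, abs_of_pos (by positivity)]
    rw [h7] at h6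
    nlinarith [Real.pi_pos]
  rw [← Real.cos_abs, ← Real.cos_pi_div_three]
  exact Real.cos_le_cos_of_nonneg_of_le_pi (abs_nonneg _) (by linarith [Real.pi_pos]) h5

lemma test_bound (s p κ : ℝ) (hs : 0 < s) (hp : 2 < p) (hκ0 : 0 < κ) (hκ1 : κ < 1)
    (hM : (⨆ (U : Hs 1 s) (_ : U.Nontriv), Qquot p κ U) < ⊤) :
    ∃ M : ℝ, ∀ (a : Esp 1) (r δ : ℝ), 0 < r → 0 < δ →
      (∀ ξ ∈ Metric.closedBall a r, |‖ξ‖ ^ s - 1| ≤ δ) →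
      r * (1 / (3 * r)) ^ (1 / p) ≤ M * ((2 * r) ^ (1 / 2 : ℝ) * δ ^ (1 - κ)) := by
  set M := (⨆ (U : Hs 1 s) (_ : U.Nontriv), Qquot p κ U) with hMdef
  refine ⟨M.toReal, fun a r δ hr hδ hδ' => ?_⟩
  have hp0 : 0 < p := by linarith
  have hms : MeasurableSet (Metric.closedBall a r) := Metric.isClosed_closedBall.measurableSet
  set h : Esp 1 → ℂ := (Metric.closedBall a r).indicator (fun _ => (1:ℂ)) with hh
  have hmem : ∀ q : ENNReal, MemLp h q volume := fun q =>
    memLp_indicator_const q hms _ (Or.inr (by rw [vol_closedBall_esp]; exact ENNReal.ofReal_ne_top))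
  have hcont : Continuous (fun ξ : Esp 1 => (((1 + ‖ξ‖ ^ 2) ^ (s / 2) : ℝ) : ℂ)) := by
    refine Complex.continuous_ofReal.comp ?_
    refine Continuous.rpow_const (by fun_prop) (fun x => Or.inr (by positivity))
  obtain ⟨C, hC⟩ := (isCompact_closedBall a r).exists_bound_of_continuousOn hcont.continuousOn
  have hw : MemLp (fun ξ => (((1 + ‖ξ‖ ^ 2) ^ (s / 2) : ℝ) : ℂ) * h ξ) 2
      (volume : Measure (Esp 1)) := by
    refine (hmem 2).of_le_mul (c := C) (hcont.aestronglyMeasurable.mul (hmem 2).1)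
      (Eventually.of_forall fun ξ => ?_)
    by_cases hξ : ξ ∈ Metric.closedBall a r
    · rw [norm_mul]; gcongr; exact hC ξ hξ
    · simp [hh, Set.indicator_of_notMem hξ]
  obtain ⟨U, hU⟩ := Hs.exists_of_hat (hmem 2) hw
  have hA : eLpNorm U.u 2 volume = ENNReal.ofReal ((2 * r) ^ (1 / 2 : ℝ)) := by
    rw [U.plancherel hs, hU, hh, eLpNorm_indicator_const hms (by norm_num) (by norm_num),
      vol_closedBall_esp, ENNReal.ofReal_rpow_of_pos (by positivity)]
    simp
  have hB : dNorm U ≤ ENNReal.ofReal δ * ENNReal.ofReal ((2 * r) ^ (1 / 2 : ℝ)) := by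
    rw [← hA, U.plancherel hs, hU, dNorm, hU]
    refine eLpNorm_le_mul_eLpNorm_of_ae_le_mul (Eventually.of_forall fun ξ => ?_) 2
    by_cases hξ : ξ ∈ Metric.closedBall a r
    · rw [norm_mul, Complex.norm_real, Real.norm_eq_abs]; gcongr; exact hδ' ξ hξ
    · simp [hh, Set.indicator_of_notMem hξ]
  have hnt : U.Nontriv := by
    intro h0
    have := eLpNorm_congr_ae (p := 2) h0
    rw [hA, eLpNorm_zero, ENNReal.ofReal_eq_zero] at this
    have h2 : 0 < (2 * r) ^ (1 / 2 : ℝ) := by positivity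
    linarith
  have hQ : Qquot p κ U ≤ M := le_iSup₂ (f := fun (U : Hs 1 s) (_ : U.Nontriv) => Qquot p κ U) U hnt
  unfold Qquot at hQ
  rw [ENNReal.div_le_iff_le_mul (Or.inr hM.ne) (Or.inl (ENNReal.mul_lt_top
    (ENNReal.rpow_lt_top_of_nonneg hκ0.le U.u_mem.2.ne)
    (ENNReal.rpow_lt_top_of_nonneg (by linarith) (dNorm_lt_top hs U).ne)).ne)] at hQ
  have hlow : ENNReal.ofReal (r * (1 / (3 * r)) ^ (1 / p)) ≤
      eLpNorm U.u (ENNReal.ofReal p) volume := by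
    have hms0 : MeasurableSet (Metric.closedBall (0 : Esp 1) (1 / (6 * r))) :=
      Metric.isClosed_closedBall.measurableSet
    have e : ENNReal.ofReal (r * (1 / (3 * r)) ^ (1 / p)) = eLpNorm
      ((Metric.closedBall (0 : Esp 1) (1 / (6 * r))).indicator (fun _ => r))
      (ENNReal.ofReal p) volume := by
      rw [eLpNorm_indicator_const hms0 (by simpa using hp0) (by simp), vol_closedBall_esp,
        ENNReal.toReal_ofReal hp0.le, ENNReal.ofReal_rpow_of_pos (by positivity),
        ENNReal.ofReal_mul hr.le, ← ofReal_norm, Real.norm_of_nonneg hr.le]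
      congr 4
      field_simp
      norm_num
    rw [e]
    refine eLpNorm_mono_ae ?_
    filter_upwards [U.u_ae (by rw [hU]; exact memLp_one_iff_integrable.1 (hmem 1))] with x hx
    by_cases hx' : x ∈ Metric.closedBall (0 : Esp 1) (1 / (6 * r))
    · rw [Set.indicator_of_mem hx', hx, hU, Real.norm_of_nonneg hr.le]
      exact fourierInv_lower a x r hr (by simpa using hx')
    · rw [Set.indicator_of_notMem hx']; simp
  have hfin : ENNReal.ofReal (r * (1 / (3 * r)) ^ (1 / p)) ≤
      ENNReal.ofReal (M.toReal * ((2 * r) ^ (1 / 2 : ℝ) * δ ^ (1 - κ))) := by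
    refine hlow.trans (hQ.trans ?_)
    rw [ENNReal.ofReal_mul ENNReal.toReal_nonneg, ENNReal.ofReal_toReal hM.ne]
    gcongr
    rw [hA]
    have hκ' : 0 ≤ 1 - κ := by linarith
    calc _ ≤ ENNReal.ofReal ((2 * r) ^ (1 / 2 : ℝ)) ^ κ *
          (ENNReal.ofReal δ * ENNReal.ofReal ((2 * r) ^ (1 / 2 : ℝ))) ^ (1 - κ) := by gcongr
      _ = _ := by
        set y := (2 * r) ^ (1 / 2 : ℝ) with hy
        have hy0 : 0 < y := by positivity
        rw [← ENNReal.ofReal_mul hδ.le, ENNReal.ofReal_rpow_of_pos hy0,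
          ENNReal.ofReal_rpow_of_pos (by positivity), ← ENNReal.ofReal_mul (by positivity)]
        congr 1
        rw [Real.mul_rpow hδ.le hy0.le, mul_left_comm, ← Real.rpow_add hy0]
        rw [show κ + (1 - κ) = 1 by ring, Real.rpow_one, mul_comm]
  exact (ENNReal.ofReal_le_ofReal_iff (by positivity)).1 hfin

lemma test_algebra (p θ M C m r : ℝ) (hC : 0 < C) (hr : 0 < r)
    (h : r * (1 / (3 * r)) ^ (1 / p) ≤ M * ((2 * r) ^ (1 / 2 : ℝ) * (C * r ^ m) ^ θ)) :
    r ^ (1 / 2 - 1 / p - m * θ) ≤ M * (2 ^ (1 / 2 : ℝ) * C ^ θ * 3 ^ (1 / p)) := by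
  have e1 : r * (1 / (3 * r)) ^ (1 / p) =
      r ^ (1 / 2 - 1 / p - m * θ) * (r ^ (1 / 2 + m * θ) / 3 ^ (1 / p)) := by
    rw [one_div (3 * r), Real.inv_rpow (by positivity), Real.mul_rpow (by norm_num) hr.le,
      ← mul_div_assoc, ← Real.rpow_add hr,
      show 1 / 2 - 1 / p - m * θ + (1 / 2 + m * θ) = 1 - 1 / p by ring, Real.rpow_sub hr,
      Real.rpow_one]
    field_simp
  have e2 : M * ((2 * r) ^ (1 / 2 : ℝ) * (C * r ^ m) ^ θ) =
      M * (2 ^ (1 / 2 : ℝ) * C ^ θ * 3 ^ (1 / p)) * (r ^ (1 / 2 + m * θ) / 3 ^ (1 / p)) := by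
    rw [Real.mul_rpow (by norm_num) hr.le, Real.mul_rpow hC.le (by positivity),
      ← Real.rpow_mul hr.le, Real.rpow_add hr]
    field_simp
  rw [e1, e2] at h
  exact le_of_mul_le_mul_right h (by positivity)

lemma necessity (s p κ : ℝ) (hs : 0 < s) (hp : 2 < p) (hκ0 : 0 < κ) (hκ1 : κ < 1)
    (hM : (⨆ (U : Hs 1 s) (_ : U.Nontriv), Qquot p κ U) < ⊤) :
    1 / (2 * s) ≤ (1 - κ) * p / (p - 2) ∧ (1 - κ) * p / (p - 2) ≤ 1 / 2 := by
  obtain ⟨M, hM⟩ := test_bound s p κ hs hp hκ0 hκ1 hM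
  have hp0 : 0 < p := by linarith
  have hp2 : 0 < p - 2 := by linarith
  constructor
  · by_contra hcon
    have hpos : 0 < 1 / 2 - 1 / p - s * (1 - κ) := by
      rw [not_le, div_lt_div_iff₀ hp2 (by positivity)] at hcon
      have : 1 / 2 - 1 / p - s * (1 - κ) = (1 * (p - 2) - (1 - κ) * p * (2 * s)) / (2 * p) := by
        field_simp
        try ring
      rw [this]
      apply div_pos (by linarith) (by positivity)
    have ht := tendsto_rpow_atTop hpos
    obtain ⟨r, h1, h2⟩ := ((eventually_ge_atTop (1:ℝ)).and (ht.eventually_gt_atTop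
      (M * (2 ^ (1 / 2 : ℝ) * 1 ^ (1 - κ) * 3 ^ (1 / p))))).exists
    have hr : 0 < r := by linarith
    refine absurd (test_algebra p (1 - κ) M 1 s r one_pos hr
      (hM 0 r (1 * r ^ s) hr (by positivity) ?_)) (not_le.2 h2)
    intro ξ hξ
    have hξ' : ‖ξ‖ ≤ r := by simpa using hξ
    have h3 : ‖ξ‖ ^ s ≤ r ^ s := Real.rpow_le_rpow (norm_nonneg _) hξ' hs.le
    have h4 : 1 ≤ r ^ s := Real.one_le_rpow h1 hs.le
    have h5 : 0 ≤ ‖ξ‖ ^ s := by positivity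
    rw [one_mul, abs_le]
    constructor <;> linarith
  · by_contra hcon
    have hpos : 0 < -(1 / 2 - 1 / p - 1 * (1 - κ)) := by
      rw [not_le, div_lt_div_iff₀ (by positivity) hp2] at hcon
      have : -(1 / 2 - 1 / p - 1 * (1 - κ)) = ((1 - κ) * p * 2 - 1 * (p - 2)) / (2 * p) := by
        field_simp
        ring
      rw [this]
      apply div_pos (by linarith) (by positivity)
    have hder : HasDerivAt (fun t : ℝ => t ^ s) (s * 1 ^ (s - 1)) 1 :=
      Real.hasDerivAt_rpow_const (Or.inl one_ne_zero)
    obtain ⟨C, hC0, hC⟩ := hder.differentiableAt.isBigO_sub.exists_pos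
    rw [Asymptotics.isBigOWith_iff, Metric.eventually_nhds_iff] at hC
    obtain ⟨ε, hε, hC⟩ := hC
    have ht := tendsto_rpow_atTop hpos
    obtain ⟨R, ⟨h1, h1'⟩, h2⟩ := (((eventually_gt_atTop (0:ℝ)).and
      (eventually_gt_atTop (ε⁻¹))).and (ht.eventually_gt_atTop
      (M * (2 ^ (1 / 2 : ℝ) * C ^ (1 - κ) * 3 ^ (1 / p))))).exists
    have hr : 0 < R⁻¹ := by positivity
    have hrε : R⁻¹ < ε := by
      rw [inv_lt_comm₀ h1 hε]; exact h1'
    rw [Real.rpow_neg h1.le, ← Real.inv_rpow h1.le] at h2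
    refine absurd (test_algebra p (1 - κ) M C 1 R⁻¹ hC0 hr
      (hM (EuclideanSpace.single 0 1) R⁻¹ (C * R⁻¹ ^ (1:ℝ)) hr (by positivity) ?_)) (not_le.2 h2)
    intro ξ hξ
    have hn : ‖(EuclideanSpace.single 0 1 : Esp 1)‖ = 1 := by simp
    have h3 : |‖ξ‖ - 1| ≤ R⁻¹ := by
      rw [← hn]
      exact (abs_norm_sub_norm_le _ _).trans (mem_closedBall_iff_norm.1 hξ)
    have h4 := hC (y := ‖ξ‖) (by rw [Real.dist_eq]; linarith)
    rw [Real.one_rpow, Real.norm_eq_abs, Real.norm_eq_abs] at h4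
    rw [Real.rpow_one]
    exact h4.trans (by gcongr)

/-- For `N = 1`, `Q_κ` is bounded on `H^s(ℝ) \ {0}` if and only if
`1/(2s) ≤ (1-κ)p/(p-2) ≤ 1/2`. -/
theorem stmt1 (s p κ : ℝ) (hs : 0 < s) (hp : 2 < p) (hκ0 : 0 < κ) (hκ1 : κ < 1) :
    (⨆ (U : Hs 1 s) (_ : U.Nontriv), Qquot p κ U) < ⊤ ↔
      (1 / (2 * s) ≤ (1 - κ) * p / (p - 2) ∧ (1 - κ) * p / (p - 2) ≤ 1 / 2) :=
  ⟨fun h => necessity s p κ hs hp hκ0 hκ1 h, fun h => sufficiency s p κ hs hp h.1 h.2⟩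

end
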